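/- (Soundness of iterated Markov boundary reduction.) Let A be a binary treatment with potential outcomes Y_0, Y_1, let the observed outcome Y satisfy consistency, and let V = (V_i)_{i ∈ I} be a finite family of covariates such that V_I controls for confounding (Y_a ⊥⊥ A | V_I for a = 0, 1) and the joint law of (A, (V_i)_{i ∈ I}) is absolutely continuous with respect to P_A ⊗ ⨂_{i ∈ I} P_{V_i} with a density that is positive almost everywhere. Let C_0 = I and, for each k < n, let C_{k+1} equal either R_A(V_{C_k}) or R_{Y|A}(V_{C_k}) (an arbitrary choice at each step). Then V_{C_n} controls for confounding: Y_a ⊥⊥ A | V_{C_n} for a = 0, 1. -/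

import Mathlib

/-!
Each reduction step preserves control of confounding, so the result follows by induction on `n`.

Everything is phrased through `condIndepGiven_iff`: `X ⊥⊥ G | K` means that the conditional
probabilities `P(X ∈ s | K, G)` are a.s. functions of `K`.

*Boundaries are blankets* (`treatBoundary_blanket`, `outBoundary_blanket`). Since the family of
subsets of `I` is finite, it suffices that blankets are closed under binary intersections. The
law of `(A, V)` is equivalent to the product of its marginals, and under a product measure a
function which depends a.e. only on the coordinates in `J₁`, and also only on those in `J₂`,
depends only on those in `J₁ ∩ J₂`: freeze the coordinates outside `J₂` at values provided by
Fubini's theorem (`exists_inter_factor`).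

*Treatment step* (`control_of_treat_blanket`). This is the contraction property of conditional
independence.

*Outcome step* (`control_of_out_blanket`). `P(Y_a ∈ s | A, V_J)` is a function of `V_J`. By
consistency it agrees on `{A = a}` with `P(Y ∈ s | A, V_J)`, which is a function of `(A, V_{J'})`.
Positivity of the density (overlap) spreads this equality from `{A = a}` to all of `Ω`, so that
`P(Y_a ∈ s | A, V_J)` is a function of `V_{J'}` alone. If `P(A = a) = 0`, then `A` is a.s. constant
and there is nothing to prove.
-/

open MeasureTheory ProbabilityTheory

/-- `X ⊥⊥ Y | W` under `μ`: conditional independence of the random elements `X` and `Y`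
given the σ-algebra generated by the random element `W`. -/
def CondIndepGiven {Ω α β γ : Type*} [mΩ : MeasurableSpace Ω] [StandardBorelSpace Ω]
    [MeasurableSpace α] [MeasurableSpace β] [MeasurableSpace γ]
    (μ : Measure Ω) [IsFiniteMeasure μ]
    (X : Ω → α) (Y : Ω → β) (W : Ω → γ) : Prop :=
  ∃ hle : MeasurableSpace.comap W inferInstance ≤ mΩ,
    CondIndepFun (MeasurableSpace.comap W inferInstance) hle X Y μ

/-- The subvector `(V_i)_{i ∈ J}` of a family of random variables. -/
def subvec {Ω I : Type*} (V : I → Ω → ℝ) (J : Set I) : Ω → (J → ℝ) :=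
  fun ω j => V j ω

/-- The joint law of `(V_i)_{i ∈ I}` is absolutely continuous w.r.t. the product
`⨂_{i ∈ I} P_{V_i}` of its one-dimensional marginal laws, with a density that is positive
almost everywhere. -/
def PositiveFamilyDensity {Ω I : Type*} [MeasurableSpace Ω] [Fintype I]
    (μ : Measure Ω) (V : I → Ω → ℝ) : Prop :=
  μ.map (fun ω i => V i ω) ≪ Measure.pi (fun i => μ.map (V i)) ∧
    ∀ᵐ x ∂(Measure.pi fun i => μ.map (V i)),
      0 < (μ.map (fun ω i => V i ω)).rnDeriv (Measure.pi fun i => μ.map (V i)) x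

/-- The joint law of `(W, (V_i)_{i ∈ I})` is absolutely continuous w.r.t. the product
`P_W ⊗ ⨂_{i ∈ I} P_{V_i}` of its one-dimensional marginal laws, with a density that is
positive almost everywhere. -/
def PositivePairDensity {Ω α I : Type*} [MeasurableSpace Ω] [MeasurableSpace α] [Fintype I]
    (μ : Measure Ω) (W : Ω → α) (V : I → Ω → ℝ) : Prop :=
  μ.map (fun ω => (W ω, fun i => V i ω)) ≪ (μ.map W).prod (Measure.pi fun i => μ.map (V i)) ∧
    ∀ᵐ x ∂((μ.map W).prod (Measure.pi fun i => μ.map (V i))),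
      0 < (μ.map (fun ω => (W ω, fun i => V i ω))).rnDeriv
            ((μ.map W).prod (Measure.pi fun i => μ.map (V i))) x

/-- The joint law of `(W, U, (V_i)_{i ∈ I})` is absolutely continuous w.r.t. the product
`P_W ⊗ P_U ⊗ ⨂_{i ∈ I} P_{V_i}` of its one-dimensional marginal laws, with a density that is
positive almost everywhere. -/
def PositiveTripleDensity {Ω I : Type*} [MeasurableSpace Ω] [Fintype I]
    (μ : Measure Ω) (W U : Ω → ℝ) (V : I → Ω → ℝ) : Prop :=
  μ.map (fun ω => (W ω, U ω, fun i => V i ω)) ≪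
      (μ.map W).prod ((μ.map U).prod (Measure.pi fun i => μ.map (V i))) ∧
    ∀ᵐ x ∂((μ.map W).prod ((μ.map U).prod (Measure.pi fun i => μ.map (V i)))),
      0 < (μ.map (fun ω => (W ω, U ω, fun i => V i ω))).rnDeriv
            ((μ.map W).prod ((μ.map U).prod (Measure.pi fun i => μ.map (V i)))) x

/-- `J ∈ 𝔯_A(V)`: `J` is a treatment Markov blanket of the family `V`,
i.e. `A ⊥⊥ V_{I∖J} | V_J`. -/
def IsTreatBlanket {Ω I : Type*} [MeasurableSpace Ω] [StandardBorelSpace Ω]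
    (μ : Measure Ω) [IsFiniteMeasure μ] (A : Ω → ℝ) (V : I → Ω → ℝ) (J : Set I) : Prop :=
  CondIndepGiven μ A (subvec V (Set.univ \ J)) (subvec V J)

/-- `J ∈ 𝔯_{Y|A}(V)`: `J` is an outcome Markov blanket of the family `V`,
i.e. `Y ⊥⊥ V_{I∖J} | (A, V_J)`. -/
def IsOutBlanket {Ω I : Type*} [MeasurableSpace Ω] [StandardBorelSpace Ω]
    (μ : Measure Ω) [IsFiniteMeasure μ] (A Y : Ω → ℝ) (V : I → Ω → ℝ) (J : Set I) : Prop :=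
  CondIndepGiven μ Y (subvec V (Set.univ \ J)) (fun ω => (A ω, subvec V J ω))

/-- `R_A(V_J)`: the treatment Markov boundary of the subfamily `(V_i)_{i ∈ J}`, i.e. the
intersection of all `J' ⊆ J` such that `A ⊥⊥ V_{J∖J'} | V_{J'}`. -/
def treatBoundary {Ω I : Type*} [MeasurableSpace Ω] [StandardBorelSpace Ω]
    (μ : Measure Ω) [IsFiniteMeasure μ] (A : Ω → ℝ) (V : I → Ω → ℝ) (J : Set I) : Set I :=
  ⋂₀ {J' : Set I | J' ⊆ J ∧ CondIndepGiven μ A (subvec V (J \ J')) (subvec V J')}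

/-- `R_{Y|A}(V_J)`: the outcome Markov boundary of the subfamily `(V_i)_{i ∈ J}`, i.e. the
intersection of all `J' ⊆ J` such that `Y ⊥⊥ V_{J∖J'} | (A, V_{J'})`. -/
def outBoundary {Ω I : Type*} [MeasurableSpace Ω] [StandardBorelSpace Ω]
    (μ : Measure Ω) [IsFiniteMeasure μ] (A Y : Ω → ℝ) (V : I → Ω → ℝ) (J : Set I) : Set I :=
  ⋂₀ {J' : Set I | J' ⊆ J ∧
        CondIndepGiven μ Y (subvec V (J \ J')) (fun ω => (A ω, subvec V J' ω))}

/-- `A` is a binary treatment taking values in `{0, 1}`. -/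
def IsBinary {Ω : Type*} (A : Ω → ℝ) : Prop :=
  ∀ ω, A ω = 0 ∨ A ω = 1

/-- Consistency of the observed outcome `Y` with the potential outcomes `Y₀, Y₁`:
`Y = Y₁` a.s. on `{A = 1}` and `Y = Y₀` a.s. on `{A = 0}`. -/
def Consistency {Ω : Type*} [MeasurableSpace Ω] (μ : Measure Ω) (A Y Y0 Y1 : Ω → ℝ) : Prop :=
  (∀ᵐ ω ∂μ, A ω = 1 → Y ω = Y1 ω) ∧ (∀ᵐ ω ∂μ, A ω = 0 → Y ω = Y0 ω)

/-- The random vector `C` controls for confounding: `Y_a ⊥⊥ A | C` for `a = 0, 1`. -/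
def ControlsConfounding {Ω γ : Type*} [MeasurableSpace Ω] [StandardBorelSpace Ω]
    [MeasurableSpace γ] (μ : Measure Ω) [IsFiniteMeasure μ]
    (A Y0 Y1 : Ω → ℝ) (C : Ω → γ) : Prop :=
  CondIndepGiven μ Y0 A C ∧ CondIndepGiven μ Y1 A C

/-! ### Conditional independence through conditional probabilities -/

lemma comap_le_comap_of_comp {Ω α β : Type*} [MeasurableSpace α] [MeasurableSpace β]
    {F : Ω → α} {G : Ω → β} (φ : β → α) (hφ : Measurable φ) (h : F = φ ∘ G) :
    MeasurableSpace.comap F inferInstance ≤ MeasurableSpace.comap G inferInstance := by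
  subst h
  rw [← MeasurableSpace.comap_comp]
  exact MeasurableSpace.comap_mono hφ.comap_le

lemma integrable_ind {Ω : Type*} {mΩ : MeasurableSpace Ω} {μ : Measure Ω}
    [IsFiniteMeasure μ] {t : Set Ω} (ht : MeasurableSet t) :
    Integrable (t.indicator fun _ => (1 : ℝ)) μ :=
  (integrable_const _).indicator ht

/-- If conditioning on `m₂` already yields an `m₀`-measurable function, then conditioning on any
intermediate σ-algebra gives the same result. -/
lemma condExp_eq_of_between {Ω : Type*} {m₀ m₁ m₂ mΩ : MeasurableSpace Ω} {μ : Measure Ω}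
    [IsFiniteMeasure μ] {f : Ω → ℝ}
    (h₀₁ : m₀ ≤ m₁) (h₁₂ : m₁ ≤ m₂) (h₂ : m₂ ≤ mΩ)
    (h : AEStronglyMeasurable[m₀] (μ[f | m₂]) μ) : μ[f | m₁] =ᵐ[μ] μ[f | m₂] :=
  (condExp_condExp_of_le h₁₂ h₂).symm.trans
    (condExp_of_aestronglyMeasurable' (h₁₂.trans h₂) (h.mono h₀₁) integrable_condExp)

/-- If the conditional probability of `S` given `m₁` is `m₀`-measurable, then `S` is conditionally
independent given `m₀` of every `T` in `m₁`. -/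
lemma condExp_inter_of_aestronglyMeasurable {Ω : Type*} {m₀ m₁ mΩ : MeasurableSpace Ω}
    {μ : Measure Ω} [IsFiniteMeasure μ] (h01 : m₀ ≤ m₁) (h1 : m₁ ≤ mΩ) {S T : Set Ω}
    (hS : MeasurableSet S) (hT : MeasurableSet[m₁] T)
    (h : AEStronglyMeasurable[m₀] (μ⟦S | m₁⟧) μ) :
    μ⟦S ∩ T | m₀⟧ =ᵐ[μ] fun ω => (μ⟦S | m₀⟧) ω * (μ⟦T | m₀⟧) ω := by
  have key : μ⟦S | m₀⟧ =ᵐ[μ] μ⟦S | m₁⟧ := condExp_eq_of_between le_rfl h01 h1 h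
  have hSi : Integrable (S.indicator fun _ => (1 : ℝ)) μ := integrable_ind hS
  have hTi : Integrable (T.indicator fun _ => (1 : ℝ)) μ := integrable_ind (h1 _ hT)
  have e0 : (S ∩ T).indicator (fun _ => (1 : ℝ)) =
      T.indicator (S.indicator fun _ => (1 : ℝ)) := by
    rw [Set.indicator_indicator, Set.inter_comm]
  have e2 : T.indicator (μ⟦S | m₀⟧) = μ⟦S | m₀⟧ * T.indicator fun _ => (1 : ℝ) := by
    ext ω; by_cases hω : ω ∈ T <;> simp [hω]
  calc μ⟦S ∩ T | m₀⟧
      =ᵐ[μ] μ[μ[T.indicator (S.indicator fun _ => (1 : ℝ)) | m₁] | m₀] := by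
        rw [e0]; exact (condExp_condExp_of_le h01 h1).symm
    _ =ᵐ[μ] μ[T.indicator (μ⟦S | m₀⟧) | m₀] := by
        refine condExp_congr_ae ((condExp_indicator hSi hT).trans ?_)
        filter_upwards [key] with ω hω
        by_cases hω' : ω ∈ T <;> simp [hω', hω]
    _ =ᵐ[μ] μ⟦S | m₀⟧ * μ⟦T | m₀⟧ := by
        rw [e2]
        refine condExp_mul_of_aestronglyMeasurable_left
          stronglyMeasurable_condExp.aestronglyMeasurable ?_ hTi
        rw [← e2]
        exact integrable_condExp.indicator (h1 _ hT)

section CondIndep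

variable {Ω : Type*} [mΩ : MeasurableSpace Ω] [StandardBorelSpace Ω] {μ : Measure Ω}

lemma CondIndepGiven.symm {α β γ : Type*} [MeasurableSpace α] [MeasurableSpace β]
    [MeasurableSpace γ] [IsFiniteMeasure μ] {X : Ω → α} {Y : Ω → β} {W : Ω → γ}
    (h : CondIndepGiven μ X Y W) : CondIndepGiven μ Y X W :=
  ⟨h.1, CondIndepFun.symm h.2⟩

/-- `X ⊥⊥ G | K` holds iff the conditional probabilities of events of `X` given `(K, G)` are
functions of `K` alone. -/
lemma condIndepGiven_iff {β β' γ : Type*} [MeasurableSpace β] [MeasurableSpace β']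
    [MeasurableSpace γ] [StandardBorelSpace β] [Nonempty β] [StandardBorelSpace β'] [Nonempty β']
    [IsFiniteMeasure μ] {X : Ω → β} {G : Ω → β'} {K : Ω → γ}
    (hX : Measurable X) (hG : Measurable G) (hK : Measurable K) :
    CondIndepGiven μ X G K ↔ ∀ s, MeasurableSet s →
      AEStronglyMeasurable[MeasurableSpace.comap K inferInstance]
        (μ⟦X ⁻¹' s | MeasurableSpace.comap (fun ω => (K ω, G ω)) inferInstance⟧) μ := by
  have hKG : Measurable fun ω => (K ω, G ω) := hK.prodMk hG
  constructor
  · rintro ⟨_, h⟩ s hs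
    have h' := (condIndepFun_iff_condDistrib_prod_ae_eq_prodMkRight hX hG hK).1 h.symm
    refine ⟨fun ω => (condDistrib X K μ (K ω)).real s, ?_, ?_⟩
    · have : Measurable fun k => (condDistrib X K μ k).real s :=
        (Kernel.measurable_coe _ hs).ennreal_toReal
      exact (this.comp (comap_measurable K)).stronglyMeasurable
    · refine (condDistrib_ae_eq_condExp hKG hX hs).symm.trans ?_
      filter_upwards [ae_of_ae_map hKG.aemeasurable h'] with ω hω
      simp only [hω, Kernel.prodMkRight_apply]
  · intro h
    refine ⟨hK.comap_le, ?_⟩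
    rw [condIndepFun_iff_condExp_inter_preimage_eq_mul hX hG]
    intro s t hs ht
    have h01 : MeasurableSpace.comap K inferInstance ≤
        MeasurableSpace.comap (fun ω => (K ω, G ω)) inferInstance :=
      comap_le_comap_of_comp Prod.fst measurable_fst rfl
    exact condExp_inter_of_aestronglyMeasurable h01 hKG.comap_le (hX hs)
      ⟨Prod.snd ⁻¹' t, measurable_snd ht, rfl⟩ (h s hs)

end CondIndep

/-! ### Functions of few coordinates under a product measure -/

section Product

variable {α I : Type*} [MeasurableSpace α] [Fintype I]

open Classical in
/-- Splicing two independent samples of a product measure along `J` gives again a sample of it. -/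
lemma measurePreserving_splice (p : I → Measure ℝ) [∀ i, IsProbabilityMeasure (p i)]
    (J : Set I) :
    MeasurePreserving (fun z : (I → ℝ) × (I → ℝ) => fun i => if i ∈ J then z.1 i else z.2 i)
      ((Measure.pi p).prod (Measure.pi p)) (Measure.pi p) := by
  have hm : Measurable
      (fun z : (I → ℝ) × (I → ℝ) => fun i => if i ∈ J then z.1 i else z.2 i) := by
    refine measurable_pi_lambda _ fun i => ?_
    by_cases hi : i ∈ J <;> simp only [hi, if_true, if_false] <;> fun_prop
  refine ⟨hm, (Measure.pi_eq fun s hs => ?_).symm⟩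
  rw [Measure.map_apply hm (MeasurableSet.univ_pi hs)]
  have : (fun z : (I → ℝ) × (I → ℝ) => fun i => if i ∈ J then z.1 i else z.2 i) ⁻¹'
      (Set.pi Set.univ s) =
      (Set.pi Set.univ fun i => if i ∈ J then s i else Set.univ) ×ˢ
        (Set.pi Set.univ fun i => if i ∈ J then Set.univ else s i) := by
    ext z
    simp only [Set.mem_preimage, Set.mem_pi, Set.mem_univ, true_imp_iff, Set.mem_prod]
    rw [← forall_and]
    refine forall_congr' fun i => ?_
    by_cases hi : i ∈ J <;> simp [hi]
  rw [this, Measure.prod_prod, Measure.pi_pi, Measure.pi_pi, ← Finset.prod_mul_distrib]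
  refine Finset.prod_congr rfl fun i _ => ?_
  by_cases hi : i ∈ J <;> simp [hi]

/-- Under a product measure, a function of the coordinates in `J₁` that agrees almost everywhere
with a function of the coordinates in `J₂` is a.e. a function of the coordinates in `J₁ ∩ J₂`:
by Fubini, the coordinates outside `J₂` can be frozen at suitable values. -/
lemma exists_inter_factor (ν : Measure α) [SFinite ν] (p : I → Measure ℝ)
    [∀ i, IsProbabilityMeasure (p i)] (J₁ J₂ : Set I)
    (g₁ : α × (J₁ → ℝ) → ℝ) (g₂ : α × (J₂ → ℝ) → ℝ) (hg₁ : Measurable g₁)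
    (h : ∀ᵐ x ∂ν.prod (Measure.pi p), g₁ (x.1, fun i => x.2 i) = g₂ (x.1, fun i => x.2 i)) :
    ∃ g₃ : α × ((J₁ ∩ J₂ : Set I) → ℝ) → ℝ, Measurable g₃ ∧
      ∀ᵐ x ∂ν.prod (Measure.pi p),
        g₂ (x.1, fun i => x.2 i) = g₃ (x.1, fun i => x.2 i) := by
  classical
  have hq := (((MeasurePreserving.id ν).prod (measurePreserving_splice p J₂)).comp
    (measurePreserving_prodAssoc ν (Measure.pi p) (Measure.pi p))).quasiMeasurePreserving.ae h
  have hq' := Measure.ae_ae_of_ae_prod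
    (Measure.measurePreserving_swap.quasiMeasurePreserving.ae hq)
  obtain ⟨w, hw⟩ := hq'.exists
  refine ⟨fun z => g₁ (z.1, fun j => if hj : (j : I) ∈ J₂ then z.2 ⟨j, j.2, hj⟩ else w j), ?_, ?_⟩
  · refine hg₁.comp (measurable_fst.prodMk (measurable_pi_lambda _ fun j => ?_))
    by_cases hj : (j : I) ∈ J₂ <;> simp only [hj, dite_true, dite_false] <;> fun_prop
  · filter_upwards [hw] with x hx
    simp [MeasurableEquiv.prodAssoc] at hx
    simpa using hx.symm

end Product

/-! ### Consequences of the positive density -/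

section Laws

variable {Ω I : Type*} [MeasurableSpace Ω] [Fintype I] {μ : Measure Ω} {V : I → Ω → ℝ}

lemma measurable_subvec {Ω I : Type*} [MeasurableSpace Ω] {V : I → Ω → ℝ}
    (hV : ∀ i, Measurable (V i)) (J : Set I) : Measurable (subvec V J) :=
  measurable_pi_lambda _ fun j => hV j

/-- The intersection property on `Ω`: if the law of `(T, V)` is equivalent to a product measure,
then being a.e. a function of `(T, V_{J₁})` and of `(T, V_{J₂})` entails being a.e. a function of
`(T, V_{J₁ ∩ J₂})`. -/
lemma aestronglyMeasurable_inter {α : Type*} [MeasurableSpace α] {T : Ω → α}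
    (hT : Measurable T) (hV : ∀ i, Measurable (V i))
    {ν : Measure α} [SFinite ν] {p : I → Measure ℝ} [∀ i, IsProbabilityMeasure (p i)]
    (hac : μ.map (fun ω => (T ω, fun i => V i ω)) ≪ ν.prod (Measure.pi p))
    (hca : ν.prod (Measure.pi p) ≪ μ.map (fun ω => (T ω, fun i => V i ω)))
    {J₁ J₂ : Set I} {f : Ω → ℝ}
    (h₁ : AEStronglyMeasurable[MeasurableSpace.comap (fun ω => (T ω, subvec V J₁ ω))
      inferInstance] f μ)
    (h₂ : AEStronglyMeasurable[MeasurableSpace.comap (fun ω => (T ω, subvec V J₂ ω))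
      inferInstance] f μ) :
    AEStronglyMeasurable[MeasurableSpace.comap (fun ω => (T ω, subvec V (J₁ ∩ J₂) ω))
      inferInstance] f μ := by
  obtain ⟨f₁, hf₁, e₁⟩ := h₁
  obtain ⟨f₂, hf₂, e₂⟩ := h₂
  obtain ⟨g₁, hg₁, rfl⟩ := hf₁.exists_eq_measurable_comp
  obtain ⟨g₂, hg₂, rfl⟩ := hf₂.exists_eq_measurable_comp
  have hTV : Measurable fun ω => (T ω, fun i => V i ω) := hT.prodMk (measurable_pi_lambda _ hV)
  have hr : ∀ J : Set I, Measurable fun x : α × (I → ℝ) => (x.1, fun i : J => x.2 i) :=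
    fun J => by fun_prop
  have h : ∀ᵐ x ∂μ.map (fun ω => (T ω, fun i => V i ω)),
      g₁ (x.1, fun i => x.2 i) = g₂ (x.1, fun i => x.2 i) := by
    refine (ae_map_iff hTV.aemeasurable (measurableSet_eq_fun (hg₁.measurable.comp (hr J₁))
      (hg₂.measurable.comp (hr J₂)))).2 ?_
    filter_upwards [e₁, e₂] with ω h₁ h₂
    exact h₁.symm.trans h₂
  obtain ⟨g₃, hg₃, e₃⟩ := exists_inter_factor ν p J₁ J₂ g₁ g₂ hg₁.measurable (hca.ae_le h)
  refine ⟨fun ω => g₃ (T ω, subvec V (J₁ ∩ J₂) ω),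
    (hg₃.comp (comap_measurable _)).stronglyMeasurable, ?_⟩
  filter_upwards [e₂, ae_of_ae_map hTV.aemeasurable (hac.ae_le e₃)] with ω h₂ h₃
  exact h₂.trans h₃

lemma PositivePairDensity.absolutelyContinuous {α : Type*} [MeasurableSpace α] {W : Ω → α}
    [IsFiniteMeasure μ] (h : PositivePairDensity μ W V) :
    (μ.map W).prod (Measure.pi fun i => μ.map (V i)) ≪ μ.map (fun ω => (W ω, fun i => V i ω)) := by
  have := withDensity_absolutelyContinuous' (Measure.measurable_rnDeriv
    (μ.map (fun ω => (W ω, fun i => V i ω)))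
    ((μ.map W).prod (Measure.pi fun i => μ.map (V i)))).aemeasurable (h.2.mono fun _ hx => hx.ne')
  rwa [Measure.withDensity_rnDeriv_eq _ _ h.1] at this

variable [IsProbabilityMeasure μ] {A : Ω → ℝ}

/-- The law of `V` alone is equivalent to the product of its marginals. -/
lemma PositivePairDensity.law_snd (hA : Measurable A) (hV : ∀ i, Measurable (V i))
    (h : PositivePairDensity μ A V) :
    μ.map (fun ω i => V i ω) ≪ Measure.pi (fun i => μ.map (V i)) ∧
      Measure.pi (fun i => μ.map (V i)) ≪ μ.map (fun ω i => V i ω) := by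
  have := Measure.isProbabilityMeasure_map (μ := μ) hA.aemeasurable
  have := fun i => Measure.isProbabilityMeasure_map (μ := μ) (hV i).aemeasurable
  have hAV : Measurable fun ω => (A ω, fun i => V i ω) := hA.prodMk (measurable_pi_lambda _ hV)
  have e₁ : (μ.map (fun ω => (A ω, fun i => V i ω))).map Prod.snd = μ.map (fun ω i => V i ω) :=
    Measure.map_map measurable_snd hAV
  have e₂ : ((μ.map A).prod (Measure.pi fun i => μ.map (V i))).map Prod.snd =
      Measure.pi fun i => μ.map (V i) := by
    rw [Measure.map_snd_prod]; simp
  rw [← e₁, ← e₂]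
  exact ⟨h.1.map measurable_snd, h.absolutelyContinuous.map measurable_snd⟩

/-- Overlap: an event of `V` that holds a.s. on `{A = a}`, where `P(A = a) > 0`, holds a.s. -/
lemma PositivePairDensity.ae_of_ae_on (hA : Measurable A) (hV : ∀ i, Measurable (V i))
    (h : PositivePairDensity μ A V) {a : ℝ} (ha : ¬ ∀ᵐ ω ∂μ, A ω ≠ a) {Q : (I → ℝ) → Prop}
    (hQ : MeasurableSet {v | Q v}) (hae : ∀ᵐ ω ∂μ, A ω = a → Q fun i => V i ω) :
    ∀ᵐ ω ∂μ, Q fun i => V i ω := by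
  have := fun i => Measure.isProbabilityMeasure_map (μ := μ) (hV i).aemeasurable
  have hVm : Measurable fun ω i => V i ω := measurable_pi_lambda _ hV
  have hAV : Measurable fun ω => (A ω, fun i => V i ω) := hA.prodMk hVm
  have hs : MeasurableSet {x : ℝ × (I → ℝ) | x.1 = a → Q x.2} := by
    have := ((measurableSet_singleton a).preimage
      (measurable_fst : Measurable (Prod.fst : ℝ × (I → ℝ) → ℝ))).compl.union
        (hQ.preimage measurable_snd)
    convert this using 1
    ext x
    simp [imp_iff_not_or]
  have h1 : ∀ᵐ x ∂μ.map (fun ω => (A ω, fun i => V i ω)), x.1 = a → Q x.2 :=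
    (ae_map_iff hAV.aemeasurable hs).2 hae
  have h2 := Measure.ae_ae_of_ae_prod (h.absolutelyContinuous.ae_le h1)
  have h3 : ∀ᵐ v ∂Measure.pi (fun i => μ.map (V i)), Q v := by
    by_contra hcon
    refine ha (ae_of_ae_map (p := fun b => b ≠ a) hA.aemeasurable ?_)
    filter_upwards [h2] with b hb hba
    exact hcon (hb.mono fun v hv => hv hba)
  exact ae_of_ae_map hVm.aemeasurable ((h.law_snd hA hV).1.ae_le h3)

end Laws

/-! ### Markov boundaries and control of confounding -/

section Boundaries

variable {Ω I : Type*}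

lemma comap_pair_mono {α : Type*} [MeasurableSpace α] (T : Ω → α) (V : I → Ω → ℝ) {J' J : Set I}
    (h : J' ⊆ J) :
    MeasurableSpace.comap (fun ω => (T ω, subvec V J' ω)) inferInstance ≤
      MeasurableSpace.comap (fun ω => (T ω, subvec V J ω)) inferInstance :=
  comap_le_comap_of_comp (fun x => (x.1, fun j => x.2 ⟨j, h j.2⟩)) (by fun_prop) rfl

lemma comap_subvec_le_pair {α : Type*} [MeasurableSpace α] (T : Ω → α) (V : I → Ω → ℝ)
    (J : Set I) :
    MeasurableSpace.comap (subvec V J) inferInstance ≤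
      MeasurableSpace.comap (fun ω => (T ω, subvec V J ω)) inferInstance :=
  comap_le_comap_of_comp Prod.snd measurable_snd rfl

lemma comap_unit_pair (V : I → Ω → ℝ) (J : Set I) :
    MeasurableSpace.comap (fun ω => ((), subvec V J ω)) inferInstance =
      MeasurableSpace.comap (subvec V J) inferInstance :=
  le_antisymm (comap_le_comap_of_comp (fun x => ((), x)) (by fun_prop) rfl)
    (comap_subvec_le_pair _ V J)

open Classical in
lemma comap_split (V : I → Ω → ℝ) {J' J : Set I} (h : J' ⊆ J) :
    MeasurableSpace.comap (fun ω => (subvec V J' ω, subvec V (J \ J') ω)) inferInstance =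
      MeasurableSpace.comap (subvec V J) inferInstance := by
  refine le_antisymm (comap_le_comap_of_comp
    (fun x => (fun j => x ⟨j, h j.2⟩, fun j => x ⟨j, j.2.1⟩)) (by fun_prop) rfl)
    (comap_le_comap_of_comp
      (fun x j => if hj : (j : I) ∈ J' then x.1 ⟨j, hj⟩ else x.2 ⟨j, j.2, hj⟩) ?_ ?_)
  · refine measurable_pi_lambda _ fun j => ?_
    by_cases hj : (j : I) ∈ J' <;> simp only [hj, dite_true, dite_false] <;> fun_prop
  · ext ω j
    simp [subvec]

open Classical in
lemma comap_pair_split (A : Ω → ℝ) (V : I → Ω → ℝ) {J' J : Set I} (h : J' ⊆ J) :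
    MeasurableSpace.comap (fun ω => ((A ω, subvec V J' ω), subvec V (J \ J') ω)) inferInstance =
      MeasurableSpace.comap (fun ω => (A ω, subvec V J ω)) inferInstance := by
  refine le_antisymm (comap_le_comap_of_comp
    (fun x => ((x.1, fun j => x.2 ⟨j, h j.2⟩), fun j => x.2 ⟨j, j.2.1⟩)) (by fun_prop) rfl)
    (comap_le_comap_of_comp
      (fun x => (x.1.1, fun j => if hj : (j : I) ∈ J' then x.1.2 ⟨j, hj⟩ else x.2 ⟨j, j.2, hj⟩))
      (Measurable.prodMk (by fun_prop) ?_) ?_)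
  · refine measurable_pi_lambda _ fun j => ?_
    by_cases hj : (j : I) ∈ J' <;> simp only [hj, dite_true, dite_false] <;> fun_prop
  · funext ω
    refine Prod.ext rfl ?_
    ext j
    simp [subvec]

lemma comap_prod_swap {α β : Type*} [MeasurableSpace α] [MeasurableSpace β] (F : Ω → α)
    (G : Ω → β) :
    MeasurableSpace.comap (fun ω => (F ω, G ω)) inferInstance =
      MeasurableSpace.comap (fun ω => (G ω, F ω)) inferInstance :=
  le_antisymm (comap_le_comap_of_comp Prod.swap measurable_swap rfl)
    (comap_le_comap_of_comp Prod.swap measurable_swap rfl)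

/-- A nonempty intersection-stable family of subsets of a finite type contains its intersection. -/
lemma sInter_mem_of_inter_mem [Finite I] {S : Set (Set I)} (hne : S.Nonempty)
    (h : ∀ s ∈ S, ∀ t ∈ S, s ∩ t ∈ S) : ⋂₀ S ∈ S := by
  have key : ∀ F : Set (Set I), F.Finite → F.Nonempty → F ⊆ S → ⋂₀ F ∈ S := by
    intro F hF
    induction F, hF using Set.Finite.induction_on with
    | empty => intro h0; exact absurd h0 Set.not_nonempty_empty
    | @insert a F _ _ ih =>
      intro _ hsub
      rcases F.eq_empty_or_nonempty with rfl | hF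
      · simpa using hsub (Set.mem_insert _ _)
      · rw [Set.sInter_insert]
        exact h _ (hsub (Set.mem_insert _ _)) _ (ih hF fun x hx => hsub (Set.mem_insert_of_mem _ hx))
  exact key S S.toFinite hne subset_rfl

variable [mΩ : MeasurableSpace Ω] [StandardBorelSpace Ω] {μ : Measure Ω}
  [IsProbabilityMeasure μ] {V : I → Ω → ℝ} {A Y : Ω → ℝ}

lemma control_iff (hA : Measurable A) (hY : Measurable Y) (hV : ∀ i, Measurable (V i))
    (J : Set I) :
    CondIndepGiven μ Y A (subvec V J) ↔ ∀ s, MeasurableSet s →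
      AEStronglyMeasurable[MeasurableSpace.comap (subvec V J) inferInstance]
        (μ⟦Y ⁻¹' s | MeasurableSpace.comap (fun ω => (A ω, subvec V J ω)) inferInstance⟧) μ := by
  rw [condIndepGiven_iff hY hA (measurable_subvec hV _), comap_prod_swap]

variable [Fintype I]

lemma treat_blanket_iff (hA : Measurable A) (hV : ∀ i, Measurable (V i)) {J' J : Set I}
    (h : J' ⊆ J) :
    CondIndepGiven μ A (subvec V (J \ J')) (subvec V J') ↔ ∀ s, MeasurableSet s →
      AEStronglyMeasurable[MeasurableSpace.comap (subvec V J') inferInstance]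
        (μ⟦A ⁻¹' s | MeasurableSpace.comap (subvec V J) inferInstance⟧) μ := by
  rw [condIndepGiven_iff hA (measurable_subvec hV _) (measurable_subvec hV _), comap_split V h]

lemma out_blanket_iff (hA : Measurable A) (hY : Measurable Y) (hV : ∀ i, Measurable (V i))
    {J' J : Set I} (h : J' ⊆ J) :
    CondIndepGiven μ Y (subvec V (J \ J')) (fun ω => (A ω, subvec V J' ω)) ↔
      ∀ s, MeasurableSet s →
        AEStronglyMeasurable[MeasurableSpace.comap (fun ω => (A ω, subvec V J' ω)) inferInstance]
          (μ⟦Y ⁻¹' s | MeasurableSpace.comap (fun ω => (A ω, subvec V J ω)) inferInstance⟧) μ := by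
  rw [condIndepGiven_iff hY (measurable_subvec hV _) (hA.prodMk (measurable_subvec hV _)),
    comap_pair_split A V h]

/-- The treatment Markov boundary is itself a treatment Markov blanket. -/
lemma treatBoundary_blanket (hA : Measurable A) (hV : ∀ i, Measurable (V i))
    (hpos : PositivePairDensity μ A V) (J : Set I) :
    treatBoundary μ A V J ⊆ J ∧ CondIndepGiven μ A (subvec V (J \ treatBoundary μ A V J))
      (subvec V (treatBoundary μ A V J)) := by
  have := fun i => Measure.isProbabilityMeasure_map (μ := μ) (hV i).aemeasurable
  refine sInter_mem_of_inter_mem (S := {J' : Set I | J' ⊆ J ∧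
    CondIndepGiven μ A (subvec V (J \ J')) (subvec V J')}) ⟨J, subset_rfl, ?_⟩ ?_
  · rw [treat_blanket_iff hA hV subset_rfl]
    exact fun s _ => stronglyMeasurable_condExp.aestronglyMeasurable
  · rintro J₁ ⟨hJ₁, h₁⟩ J₂ ⟨hJ₂, h₂⟩
    have hJ : J₁ ∩ J₂ ⊆ J := Set.inter_subset_left.trans hJ₁
    refine ⟨hJ, ?_⟩
    rw [treat_blanket_iff hA hV hJ₁] at h₁
    rw [treat_blanket_iff hA hV hJ₂] at h₂
    rw [treat_blanket_iff hA hV hJ]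
    intro s hs
    have hVm : Measurable fun ω i => V i ω := measurable_pi_lambda _ hV
    -- The law of `V`, paired with a trivial variable, is equivalent to a product.
    have hm : Measurable fun v : I → ℝ => ((), v) := by fun_prop
    have e₁ : μ.map (fun ω => ((), fun i => V i ω)) =
        (μ.map fun ω i => V i ω).map fun v => ((), v) := (Measure.map_map hm hVm).symm
    have e₂ : (Measure.dirac ()).prod (Measure.pi fun i => μ.map (V i)) =
        (Measure.pi fun i => μ.map (V i)).map fun v => ((), v) := Measure.dirac_prod _
    obtain ⟨hac, hca⟩ := hpos.law_snd hA hV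
    have hac' := hac.map hm
    have hca' := hca.map hm
    rw [← e₁, ← e₂] at hac' hca'
    have h₁' := h₁ s hs
    have h₂' := h₂ s hs
    rw [← comap_unit_pair V J₁] at h₁'
    rw [← comap_unit_pair V J₂] at h₂'
    rw [← comap_unit_pair V (J₁ ∩ J₂)]
    exact aestronglyMeasurable_inter measurable_const hV hac' hca' h₁' h₂'

/-- The outcome Markov boundary is itself an outcome Markov blanket. -/
lemma outBoundary_blanket (hA : Measurable A) (hY : Measurable Y) (hV : ∀ i, Measurable (V i))
    (hpos : PositivePairDensity μ A V) (J : Set I) :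
    outBoundary μ A Y V J ⊆ J ∧ CondIndepGiven μ Y (subvec V (J \ outBoundary μ A Y V J))
      (fun ω => (A ω, subvec V (outBoundary μ A Y V J) ω)) := by
  have := fun i => Measure.isProbabilityMeasure_map (μ := μ) (hV i).aemeasurable
  refine sInter_mem_of_inter_mem (S := {J' : Set I | J' ⊆ J ∧
    CondIndepGiven μ Y (subvec V (J \ J')) (fun ω => (A ω, subvec V J' ω))})
    ⟨J, subset_rfl, ?_⟩ ?_
  · rw [out_blanket_iff hA hY hV subset_rfl]
    exact fun s _ => stronglyMeasurable_condExp.aestronglyMeasurable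
  · rintro J₁ ⟨hJ₁, h₁⟩ J₂ ⟨hJ₂, h₂⟩
    have hJ : J₁ ∩ J₂ ⊆ J := Set.inter_subset_left.trans hJ₁
    refine ⟨hJ, ?_⟩
    rw [out_blanket_iff hA hY hV hJ₁] at h₁
    rw [out_blanket_iff hA hY hV hJ₂] at h₂
    rw [out_blanket_iff hA hY hV hJ]
    exact fun s hs => aestronglyMeasurable_inter hA hV hpos.1 hpos.absolutelyContinuous
      (h₁ s hs) (h₂ s hs)

/-- Contraction: `U ⊥⊥ A | V_J` and `A ⊥⊥ V_{J∖J'} | V_{J'}` give `U ⊥⊥ A | V_{J'}`. -/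
lemma control_of_treat_blanket {U : Ω → ℝ} (hA : Measurable A) (hU : Measurable U)
    (hV : ∀ i, Measurable (V i)) {J' J : Set I} (hJ : J' ⊆ J)
    (hc : CondIndepGiven μ U A (subvec V J))
    (hb : CondIndepGiven μ A (subvec V (J \ J')) (subvec V J')) :
    CondIndepGiven μ U A (subvec V J') := by
  have hc' := (control_iff hU hA hV J).1 hc.symm
  rw [treat_blanket_iff hA hV hJ] at hb
  refine ((control_iff hU hA hV J').2 fun s hs => ?_).symm
  have hle : MeasurableSpace.comap (fun ω => (U ω, subvec V J ω)) inferInstance ≤ mΩ :=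
    (hU.prodMk (measurable_subvec hV J)).comap_le
  have e₁ := condExp_eq_of_between le_rfl (comap_subvec_le_pair U V J) hle (hc' s hs)
  have h : AEStronglyMeasurable[MeasurableSpace.comap (subvec V J') inferInstance]
      (μ⟦A ⁻¹' s | MeasurableSpace.comap (fun ω => (U ω, subvec V J ω)) inferInstance⟧) μ :=
    (hb s hs).congr e₁
  exact h.congr (condExp_eq_of_between (comap_subvec_le_pair U V J') (comap_pair_mono U V hJ)
    hle h).symm

/-- If `Y = U` on `{A = a}`, then `U ⊥⊥ A | V_J` and `Y ⊥⊥ V_{J∖J'} | (A, V_{J'})` give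
`U ⊥⊥ A | V_{J'}`. Here `P(U ∈ s | A, V_J)` is a function of `V_J`, which coincides on `{A = a}`
with `P(Y ∈ s | A, V_J)`, a function of `(a, V_{J'})`; overlap extends the equality to `Ω`. -/
lemma control_of_out_blanket {U : Ω → ℝ} (hA : Measurable A) (hY : Measurable Y)
    (hU : Measurable U) (hV : ∀ i, Measurable (V i)) (hpos : PositivePairDensity μ A V) {a b : ℝ}
    (hbin : ∀ ω, A ω = a ∨ A ω = b) (hcons : ∀ᵐ ω ∂μ, A ω = a → Y ω = U ω)
    {J' J : Set I} (hJ : J' ⊆ J) (hc : CondIndepGiven μ U A (subvec V J))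
    (hb : CondIndepGiven μ Y (subvec V (J \ J')) (fun ω => (A ω, subvec V J' ω))) :
    CondIndepGiven μ U A (subvec V J') := by
  by_cases ha : ∀ᵐ ω ∂μ, A ω ≠ a
  · -- If `P(A = a) = 0` then `A` is a.s. constant.
    refine ((control_iff hU hA hV J').2 fun s _ => ?_).symm
    have e : (A ⁻¹' s).indicator (fun _ => (1 : ℝ)) =ᵐ[μ] fun _ => s.indicator (fun _ => 1) b := by
      filter_upwards [ha] with ω hω
      have hωb : A ω = b := (hbin ω).resolve_left hω
      by_cases hs : b ∈ s <;> simp [hωb, hs]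
    have e' := condExp_congr_ae (m := MeasurableSpace.comap (fun ω => (U ω, subvec V J' ω))
      inferInstance) e
    rw [condExp_const (hU.prodMk (measurable_subvec hV J')).comap_le] at e'
    exact ⟨_, stronglyMeasurable_const, e'⟩
  rw [control_iff hA hU hV] at hc ⊢
  rw [out_blanket_iff hA hY hV hJ] at hb
  intro s hs
  have hle : MeasurableSpace.comap (fun ω => (A ω, subvec V J ω)) inferInstance ≤ mΩ :=
    (hA.prodMk (measurable_subvec hV J)).comap_le
  obtain ⟨_, hg', eg⟩ := hc s hs
  obtain ⟨_, hk', ek⟩ := hb s hs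
  obtain ⟨g, hg, rfl⟩ := hg'.exists_eq_measurable_comp
  obtain ⟨k, hk, rfl⟩ := hk'.exists_eq_measurable_comp
  have hAa : MeasurableSet[MeasurableSpace.comap (fun ω => (A ω, subvec V J ω)) inferInstance]
      (A ⁻¹' {a}) := ⟨Prod.fst ⁻¹' {a}, measurable_fst (measurableSet_singleton a), rfl⟩
  have e : (A ⁻¹' {a}).indicator ((Y ⁻¹' s).indicator fun _ => (1 : ℝ)) =ᵐ[μ]
      (A ⁻¹' {a}).indicator ((U ⁻¹' s).indicator fun _ => (1 : ℝ)) := by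
    filter_upwards [hcons] with ω hω
    by_cases hωa : A ω = a
    · have hiff : ω ∈ Y ⁻¹' s ↔ ω ∈ U ⁻¹' s := by
        rw [Set.mem_preimage, Set.mem_preimage, hω hωa]
      by_cases hs' : ω ∈ U ⁻¹' s
      · simp only [Set.indicator, hs', hiff.2 hs']
      · simp only [Set.indicator, hs', mt hiff.1 hs']
    · simp [hωa]
  have hagree : ∀ᵐ ω ∂μ, A ω = a → g (subvec V J ω) = k (a, subvec V J' ω) := by
    filter_upwards [condExp_indicator (integrable_ind (μ := μ) (hY hs)) hAa,
      condExp_indicator (integrable_ind (μ := μ) (hU hs)) hAa, condExp_congr_ae e, eg, ek]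
      with ω h₁ h₂ h₃ h₄ h₅ hωa
    have hmem : ω ∈ A ⁻¹' {a} := hωa
    rw [h₁, h₂, Set.indicator_of_mem hmem, Set.indicator_of_mem hmem, h₄, h₅] at h₃
    simpa [hωa] using h₃.symm
  have hQ : MeasurableSet {v : I → ℝ | g (fun j : J => v j) = k (a, fun j : J' => v j)} :=
    measurableSet_eq_fun
      (hg.measurable.comp (show Measurable fun (v : I → ℝ) (j : J) => v j by fun_prop))
      (hk.measurable.comp (show Measurable fun v : I → ℝ => (a, fun j : J' => v j) by fun_prop))
  have hall : ∀ᵐ ω ∂μ, g (subvec V J ω) = k (a, subvec V J' ω) :=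
    hpos.ae_of_ae_on hA hV ha hQ hagree
  have h : AEStronglyMeasurable[MeasurableSpace.comap (subvec V J') inferInstance]
      (μ⟦U ⁻¹' s | MeasurableSpace.comap (fun ω => (A ω, subvec V J ω)) inferInstance⟧) μ := by
    refine ⟨fun ω => k (a, subvec V J' ω), ?_, eg.trans hall⟩
    exact ((hk.measurable.comp measurable_prodMk_left).comp
      (comap_measurable (subvec V J'))).stronglyMeasurable
  exact h.congr (condExp_eq_of_between (comap_subvec_le_pair A V J') (comap_pair_mono A V hJ)
    hle h).symm

end Boundaries

/-- Soundness of iterated Markov boundary reduction: starting from `C_0 = I`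
and applying at each step either the treatment or the outcome Markov boundary operation, the
resulting set `C_n` controls for confounding. -/
theorem iterated_boundary_control
    {Ω I : Type*} [MeasurableSpace Ω] [StandardBorelSpace Ω] [Fintype I]
    (μ : Measure Ω) [IsProbabilityMeasure μ]
    (A Y Y0 Y1 : Ω → ℝ) (V : I → Ω → ℝ)
    (hA : Measurable A) (hY : Measurable Y) (hY0 : Measurable Y0) (hY1 : Measurable Y1)
    (hV : ∀ i, Measurable (V i))
    (hbin : IsBinary A)
    (hcons : Consistency μ A Y Y0 Y1)
    (hS : ControlsConfounding μ A Y0 Y1 (subvec V Set.univ))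
    (hpos : PositivePairDensity μ A V)
    (n : ℕ) (C : ℕ → Set I)
    (hC0 : C 0 = Set.univ)
    (hstep : ∀ k, k < n →
      C (k + 1) = treatBoundary μ A V (C k) ∨ C (k + 1) = outBoundary μ A Y V (C k)) :
    ControlsConfounding μ A Y0 Y1 (subvec V (C n)) := by
  induction n with
  | zero => rwa [hC0]
  | succ n ih =>
    obtain ⟨h₀, h₁⟩ := ih fun k hk => hstep k (hk.trans n.lt_succ_self)
    rcases hstep n n.lt_succ_self with h | h
    · rw [h]
      obtain ⟨hsub, hb⟩ := treatBoundary_blanket hA hV hpos (C n)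
      exact ⟨control_of_treat_blanket hA hY0 hV hsub h₀ hb,
        control_of_treat_blanket hA hY1 hV hsub h₁ hb⟩
    · rw [h]
      obtain ⟨hsub, hb⟩ := outBoundary_blanket hA hY hV hpos (C n)
      exact ⟨control_of_out_blanket hA hY hY0 hV hpos hbin hcons.2 hsub h₀ hb,
        control_of_out_blanket hA hY hY1 hV hpos (fun ω => (hbin ω).symm) hcons.1 hsub h₁ hb⟩
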